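/- arXiv:0801.4715 — 2 statements merged into one kernel-verified Lean document; each statement's English description precedes it below -/
import Mathlib

section
/- Let r > 0, n ≥ 1, let A be a real n×n symmetric positive semidefinite matrix, let d ≥ 0, let b : ℝⁿ → ℝⁿ, and let η : C([-r,0];ℝⁿ) → [0, r]. Let T > 0, φ ∈ C([-r,0];ℝⁿ), and let u : [-r,T] → ℝⁿ be a mild solution of u'(t) + A u(t) + d u(t) = b(u(t − η(u_t))) with initial condition φ. Then for every τ ∈ [0,T], the function v : [-r, T−τ] → ℝⁿ defined by v(s) = u(τ + s) is a mild solution on [-r, T−τ] of the same equation with initial condition u_τ (where u_τ(θ) = u(τ+θ) for θ ∈ [-r,0]). In particular, the solution operators satisfy the semigroup property S_t S_τ = S_{t+τ}. -/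
noncomputable section

/-- The history segment `u_t ∈ C([-r,0];E)`, `u_t(θ) = u(t+θ)`, of a function `u : ℝ → E`
(defined as the zero function in the degenerate case where `s ↦ u(t+s)` fails to be
continuous on `[-r,0]`; under the hypotheses of the theorems below this case never occurs). -/
def histSeg {E : Type*} [NormedAddCommGroup E] (r : ℝ) (u : ℝ → E) (t : ℝ) :
    C(Set.Icc (-r) (0:ℝ), E) := by
  classical
  exact if h : ContinuousOn (fun s : ℝ => u (t + s)) (Set.Icc (-r) 0) then
    ⟨fun θ => u (t + θ.1), continuousOn_iff_continuous_restrict.mp h⟩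
  else 0

/-- Condition (H): the delay functional `η` ignores the values of `φ(θ)` for
`θ ∈ (-ηign, 0]`, i.e. if `φ₁(θ) = φ₂(θ)` for all `θ ∈ [-r, -ηign]` then `η φ₁ = η φ₂`. -/
def CondH {E : Type*} [NormedAddCommGroup E] (r ηign : ℝ)
    (η : C(Set.Icc (-r) (0:ℝ), E) → ℝ) : Prop :=
  ∀ φ₁ φ₂ : C(Set.Icc (-r) (0:ℝ), E),
    (∀ θ : Set.Icc (-r) (0:ℝ), (θ : ℝ) ∈ Set.Icc (-r) (-ηign) → φ₁ θ = φ₂ θ) →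
    η φ₁ = η φ₂

/-- `u : ℝ → ℝⁿ` is a mild solution on `[-r,T]` of
`u'(t) + Au(t) + du(t) = b(u(t - η(u_t)))` with initial condition `φ`:
it is continuous on `[-r,T]`, coincides with `φ` on `[-r,0]`, and satisfies the
variation-of-constants integral equation (with integrable integrand) on `[0,T]`. -/
def IsMildSolution {n : ℕ} (r : ℝ) (hr : 0 < r) (T d : ℝ)
    (A : Matrix (Fin n) (Fin n) ℝ)
    (b : EuclideanSpace ℝ (Fin n) → EuclideanSpace ℝ (Fin n))
    (η : C(Set.Icc (-r) (0:ℝ), EuclideanSpace ℝ (Fin n)) → ℝ)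
    (φ : C(Set.Icc (-r) (0:ℝ), EuclideanSpace ℝ (Fin n)))
    (u : ℝ → EuclideanSpace ℝ (Fin n)) : Prop :=
  ContinuousOn u (Set.Icc (-r) T) ∧
  (∀ θ : Set.Icc (-r) (0:ℝ), u θ = φ θ) ∧
  ∀ t ∈ Set.Icc (0:ℝ) T,
    IntervalIntegrable
      (fun s => Matrix.toEuclideanLin (NormedSpace.exp (-((t - s) • A)))
        (b (u (s - η (histSeg r u s))) - d • u s)) MeasureTheory.volume 0 t ∧
    u t = Matrix.toEuclideanLin (NormedSpace.exp (-(t • A)))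
            (φ ⟨0, Set.right_mem_Icc.mpr (by linarith)⟩) +
      ∫ s in (0:ℝ)..t, Matrix.toEuclideanLin (NormedSpace.exp (-((t - s) • A)))
          (b (u (s - η (histSeg r u s))) - d • u s)

/-!
At time `τ + t`, split the variation-of-constants integral at `τ`. Since
`exp (-(τ + t - s) A) = exp (-t A) exp (-(τ - s) A)`, the free term together with the integral over
`[0, τ]` is `exp (-t A) (u τ)`, and substituting `s ↦ τ + s` turns the integral over `[τ, τ + t]`
into the Duhamel integral of the translated forcing. The forcing commutes with time translation
because it depends on the time `s` only through the translate `u (s + ·)`.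
-/

section Translation

variable {E : Type*}

theorem continuousOn_comp_const_add_Icc [TopologicalSpace E] {u : ℝ → E} {a b : ℝ}
    (hu : ContinuousOn u (Set.Icc a b)) (τ : ℝ) :
    ContinuousOn (fun s => u (τ + s)) (Set.Icc (a - τ) (b - τ)) := by
  rw [← Set.preimage_const_add_Icc]
  exact hu.comp (by fun_prop) (Set.mapsTo_preimage _ _)

variable [NormedAddCommGroup E] {r : ℝ}

theorem histSeg_apply {u : ℝ → E} {t : ℝ}
    (h : ContinuousOn (fun s => u (t + s)) (Set.Icc (-r) 0)) (θ : Set.Icc (-r) (0 : ℝ)) :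
    histSeg r u t θ = u (t + θ) := by
  rw [histSeg, dif_pos h]
  rfl

theorem histSeg_comp_const_add (u : ℝ → E) (τ t : ℝ) :
    histSeg r (fun s => u (τ + s)) t = histSeg r u (τ + t) := by
  have hassoc : (fun s => u (τ + (t + s))) = fun s => u (τ + t + s) := by simp only [add_assoc]
  by_cases h : ContinuousOn (fun s => u (τ + t + s)) (Set.Icc (-r) 0)
  · ext θ
    rw [histSeg_apply h, histSeg_apply (hassoc ▸ h)]
    exact congrFun hassoc θ
  · rw [histSeg, histSeg, dif_neg h, dif_neg (hassoc ▸ h)]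

/-- The right-hand side `s ↦ b (u (s - η (u_s))) - d u(s)` of the delay equation along a
trajectory `u`, with the damping term moved to the right so that only the linear part generated
by `A` remains on the left. -/
def delayForcing [NormedSpace ℝ E] (d : ℝ) (b : E → E) (η : C(Set.Icc (-r) (0 : ℝ), E) → ℝ)
    (u : ℝ → E) (s : ℝ) : E :=
  b (u (s - η (histSeg r u s))) - d • u s

theorem delayForcing_comp_const_add [NormedSpace ℝ E] (d : ℝ) (b : E → E)
    (η : C(Set.Icc (-r) (0 : ℝ), E) → ℝ) (u : ℝ → E) (τ : ℝ) :
    delayForcing d b η (fun s => u (τ + s)) = fun s => delayForcing d b η u (τ + s) := by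
  funext s
  simp only [delayForcing, histSeg_comp_const_add, add_sub_assoc]

end Translation

section Duhamel

variable {E : Type*} [NormedAddCommGroup E] [NormedSpace ℝ E] {S : ℝ → E →L[ℝ] E} {f : ℝ → E}
  {τ t : ℝ}

/-- The variation-of-constants (Duhamel) formula `S(t) x + ∫₀ᵗ S(t - s) f(s) ds` for a family of
operators `S`, forcing `f` and initial value `x`. The integral is the Bochner integral, so it is
`0` when the integrand is not integrable. -/
def duhamel (S : ℝ → E →L[ℝ] E) (f : ℝ → E) (x : E) (t : ℝ) : E :=
  S t x + ∫ s in (0 : ℝ)..t, S (t - s) (f s)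

theorem intervalIntegrable_duhamel_comp_const_add (hτ : 0 ≤ τ) (ht : 0 ≤ t)
    (hf : IntervalIntegrable (fun s => S (τ + t - s) (f s)) MeasureTheory.volume 0 (τ + t)) :
    IntervalIntegrable (fun s => S (t - s) (f (τ + s))) MeasureTheory.volume 0 t := by
  have hf_tail : IntervalIntegrable (fun s => S (τ + t - s) (f s)) MeasureTheory.volume
      τ (τ + t) :=
    hf.mono_set (Set.uIcc_subset_uIcc_right (Set.mem_uIcc_of_le hτ (by linarith)))
  simpa only [add_sub_add_left_eq_sub, sub_self, add_sub_cancel_left]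
    using hf_tail.comp_add_left τ

theorem duhamel_add [CompleteSpace E]
    (hS : ∀ ⦃s t : ℝ⦄, 0 ≤ s → 0 ≤ t → S (s + t) = S s ∘L S t) (hτ : 0 ≤ τ) (ht : 0 ≤ t)
    (hfτ : IntervalIntegrable (fun s => S (τ - s) (f s)) MeasureTheory.volume 0 τ)
    (hf : IntervalIntegrable (fun s => S (τ + t - s) (f s)) MeasureTheory.volume 0 (τ + t))
    (x : E) :
    duhamel S f x (τ + t) = duhamel S (fun s => f (τ + s)) (duhamel S f x τ) t := by
  have hτ_mem : τ ∈ Set.uIcc 0 (τ + t) := Set.mem_uIcc_of_le hτ (by linarith)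
  have split_at_τ : ∫ s in (0 : ℝ)..(τ + t), S (τ + t - s) (f s) =
      (∫ s in (0 : ℝ)..τ, S (τ + t - s) (f s)) + ∫ s in τ..(τ + t), S (τ + t - s) (f s) :=
    (intervalIntegral.integral_add_adjacent_intervals
      (hf.mono_set (Set.uIcc_subset_uIcc_left hτ_mem))
      (hf.mono_set (Set.uIcc_subset_uIcc_right hτ_mem))).symm
  have past : ∫ s in (0 : ℝ)..τ, S (τ + t - s) (f s) =
      S t (∫ s in (0 : ℝ)..τ, S (τ - s) (f s)) := by
    rw [← (S t).intervalIntegral_comp_comm hfτ]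
    refine intervalIntegral.integral_congr fun s hs => ?_
    rw [Set.uIcc_of_le hτ] at hs
    simp only [show τ + t - s = t + (τ - s) by ring, hS ht (sub_nonneg.2 hs.2),
      ContinuousLinearMap.comp_apply]
  have future : ∫ s in τ..(τ + t), S (τ + t - s) (f s) =
      ∫ s in (0 : ℝ)..t, S (t - s) (f (τ + s)) := by
    simpa only [add_sub_add_left_eq_sub, add_zero] using
      (intervalIntegral.integral_comp_add_left (a := 0) (b := t)
        (fun s => S (τ + t - s) (f s)) τ).symm
  calc duhamel S f x (τ + t)
      = S (t + τ) x + (S t (∫ s in (0 : ℝ)..τ, S (τ - s) (f s)) +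
          ∫ s in (0 : ℝ)..t, S (t - s) (f (τ + s))) := by
        rw [duhamel, split_at_τ, past, future, add_comm τ t]
    _ = duhamel S (fun s => f (τ + s)) (duhamel S f x τ) t := by
        simp only [duhamel, hS ht hτ, ContinuousLinearMap.comp_apply, map_add, add_assoc]

end Duhamel

section ExpSemigroup

variable {ι : Type*} [Fintype ι] [DecidableEq ι]

/-- The operators `exp (-t A)` generated by `-A` on Euclidean space, as continuous linear maps. -/
def expSemigroup (A : Matrix ι ι ℝ) (t : ℝ) : EuclideanSpace ℝ ι →L[ℝ] EuclideanSpace ℝ ι :=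
  (Matrix.toEuclideanLin (NormedSpace.exp (-(t • A)))).toContinuousLinearMap

theorem expSemigroup_add (A : Matrix ι ι ℝ) (s t : ℝ) :
    expSemigroup A (s + t) = expSemigroup A s ∘L expSemigroup A t := by
  have hcomm : Commute (-(s • A)) (-(t • A)) :=
    (((Commute.refl A).smul_left s).smul_right t).neg_left.neg_right
  have hexp : NormedSpace.exp (-((s + t) • A)) =
      NormedSpace.exp (-(s • A)) * NormedSpace.exp (-(t • A)) := by
    rw [add_smul, neg_add, Matrix.exp_add_of_commute _ _ hcomm]
  ext1 x
  simp only [expSemigroup, hexp, Matrix.toLpLin_mul_same, ContinuousLinearMap.comp_apply,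
    LinearMap.coe_toContinuousLinearMap', LinearMap.comp_apply]

end ExpSemigroup

theorem isMildSolution_iff_duhamel {n : ℕ} {r : ℝ} {hr : 0 < r} {T d : ℝ}
    {A : Matrix (Fin n) (Fin n) ℝ}
    {b : EuclideanSpace ℝ (Fin n) → EuclideanSpace ℝ (Fin n)}
    {η : C(Set.Icc (-r) (0 : ℝ), EuclideanSpace ℝ (Fin n)) → ℝ}
    {φ : C(Set.Icc (-r) (0 : ℝ), EuclideanSpace ℝ (Fin n))}
    {u : ℝ → EuclideanSpace ℝ (Fin n)} :
    IsMildSolution r hr T d A b η φ u ↔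
      ContinuousOn u (Set.Icc (-r) T) ∧ (∀ θ : Set.Icc (-r) (0 : ℝ), u θ = φ θ) ∧
      ∀ t ∈ Set.Icc (0 : ℝ) T,
        IntervalIntegrable (fun s => expSemigroup A (t - s) (delayForcing d b η u s))
          MeasureTheory.volume 0 t ∧
        u t = duhamel (expSemigroup A) (delayForcing d b η u)
          (φ ⟨0, Set.right_mem_Icc.mpr (by linarith)⟩) t :=
  Iff.rfl

theorem mild_solution_shift_general {n : ℕ} {r : ℝ} {hr : 0 < r} {T d : ℝ}
    {A : Matrix (Fin n) (Fin n) ℝ}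
    {b : EuclideanSpace ℝ (Fin n) → EuclideanSpace ℝ (Fin n)}
    {η : C(Set.Icc (-r) (0 : ℝ), EuclideanSpace ℝ (Fin n)) → ℝ}
    {φ : C(Set.Icc (-r) (0 : ℝ), EuclideanSpace ℝ (Fin n))}
    {u : ℝ → EuclideanSpace ℝ (Fin n)} (hu : IsMildSolution r hr T d A b η φ u)
    {τ : ℝ} (hτ : τ ∈ Set.Icc 0 T) :
    IsMildSolution r hr (T - τ) d A b η (histSeg r u τ) (fun s => u (τ + s)) := by
  rw [isMildSolution_iff_duhamel] at hu ⊢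
  obtain ⟨hcont, -, hmild⟩ := hu
  obtain ⟨hτ₀, hτT⟩ := hτ
  have hcont_shift : ContinuousOn (fun s => u (τ + s)) (Set.Icc (-r) (T - τ)) :=
    (continuousOn_comp_const_add_Icc hcont τ).mono (Set.Icc_subset_Icc_left (by linarith))
  have hhist : ∀ θ, histSeg r u τ θ = u (τ + θ) :=
    histSeg_apply (hcont_shift.mono (Set.Icc_subset_Icc_right (by linarith)))
  refine ⟨hcont_shift, fun θ => (hhist θ).symm, fun t ⟨ht₀, htT⟩ => ?_⟩
  obtain ⟨hint_τ, hu_τ⟩ := hmild τ ⟨hτ₀, hτT⟩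
  obtain ⟨hint_add, hu_add⟩ := hmild (τ + t) ⟨by linarith, by linarith⟩
  rw [delayForcing_comp_const_add, hhist, add_zero, hu_τ, hu_add]
  exact ⟨intervalIntegrable_duhamel_comp_const_add hτ₀ ht₀ hint_add,
    duhamel_add (fun s t _ _ => expSemigroup_add A s t) hτ₀ ht₀ hint_τ hint_add _⟩

/-- time shift of a mild solution: if `u` is a mild solution on `[-r,T]` with
initial condition `φ`, then for `τ ∈ [0,T]` the shifted function `v(s) = u(τ+s)` is a mild
solution on `[-r, T-τ]` with initial condition the history segment `u_τ` (this is the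
semigroup property `S_t S_τ = S_{t+τ}` of the solution operators). -/
theorem mild_solution_shift
    {n : ℕ} (hn : 1 ≤ n) (r : ℝ) (hr : 0 < r)
    (A : Matrix (Fin n) (Fin n) ℝ) (hA : A.PosSemidef) (hAs : A.IsSymm)
    (d : ℝ) (hd : 0 ≤ d)
    (b : EuclideanSpace ℝ (Fin n) → EuclideanSpace ℝ (Fin n))
    (η : C(Set.Icc (-r) (0:ℝ), EuclideanSpace ℝ (Fin n)) → ℝ)
    (hηrange : ∀ φ, η φ ∈ Set.Icc (0:ℝ) r)
    (T : ℝ) (hT : 0 < T)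
    (φ : C(Set.Icc (-r) (0:ℝ), EuclideanSpace ℝ (Fin n)))
    (u : ℝ → EuclideanSpace ℝ (Fin n))
    (hu : IsMildSolution r hr T d A b η φ u)
    (τ : ℝ) (hτ : τ ∈ Set.Icc (0:ℝ) T) :
    IsMildSolution r hr (T - τ) d A b η (histSeg r u τ) (fun s => u (τ + s)) := by
  exact mild_solution_shift_general hu hτ
end
end

section
/- Let r > 0, n ≥ 1, let A be a real n×n symmetric positive definite matrix, let d ≥ 0, let b : ℝⁿ → ℝⁿ, let η : C([-r,0];ℝⁿ) → [0, r], let T > 0, φ ∈ C([-r,0];ℝⁿ), and let u : [-r,T] → ℝⁿ be a mild solution of u'(t) + A u(t) + d u(t) = b(u(t − η(u_t))) with initial condition φ. Suppose M ≥ 0 satisfies ‖b(u(s − η(u_s))) − d·u(s)‖ ≤ M for all s ∈ [0,T]. Then for all 0 < t₁ ≤ t₂ ≤ T: ‖u(t₁) − u(t₂)‖ ≤ (t₂ − t₁)^{1/2} · [ (2e·t₁)^{−1/2}·‖φ(0)‖ + 2·(2e)^{−1/2}·t₁^{1/2}·M + (t₂ − t₁)^{1/2}·M ]. In particular, on every interval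 [a, T] with a > 0, u is Hölder continuous with exponent 1/2 and a constant depending only on a, T, ‖φ(0)‖ and M. -/
noncomputable section

/-!
For self-adjoint `A ≥ 0`, functional calculus reduces norm bounds on `e^{-tA}` to scalar bounds on
the spectrum. Since `e^{-tl} - e^{-t'l} = e^{-tl} (1 - e^{-(t'-t)l})`, the bound
`1 - e^{-y} ≤ y ^ α` extracts `(t' - t) ^ α` at the price of a factor `l ^ α`, which `e^{-tl}`
absorbs: the maximum of `l ^ α e^{-tl}` over `l ≥ 0` is `(e t / α) ^ (-α)`. For `α < 1` the
singularity `t ^ (-α)` is integrable at `0`, so Duhamel's formula carries the estimate over to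
solutions.
-/

open MeasureTheory Set

section Scalar

variable {α l t t' x : ℝ}

lemma one_sub_exp_neg_le_rpow (hα₀ : 0 ≤ α) (hα₁ : α ≤ 1) (hx : 0 ≤ x) :
    1 - Real.exp (-x) ≤ x ^ α := by
  rcases le_total x 1 with hx₁ | hx₁
  · calc 1 - Real.exp (-x) ≤ x := by linarith [Real.one_sub_le_exp_neg x]
      _ ≤ x ^ α := Real.self_le_rpow_of_le_one hx hx₁ hα₁
  · calc 1 - Real.exp (-x) ≤ 1 := by linarith [Real.exp_pos (-x)]
      _ ≤ x ^ α := Real.one_le_rpow hx₁ hα₀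

lemma rpow_mul_exp_neg_mul_le (hα : 0 < α) (hl : 0 ≤ l) (ht : 0 < t) :
    l ^ α * Real.exp (-(t * l)) ≤ (α⁻¹ * Real.exp 1 * t) ^ (-α) := by
  have base_le : l * Real.exp (-(t * l / α)) ≤ (α⁻¹ * Real.exp 1 * t)⁻¹ := by
    have := Real.mul_exp_neg_le_exp_neg_one (t * l / α)
    calc l * Real.exp (-(t * l / α)) = α / t * (t * l / α * Real.exp (-(t * l / α))) := by
          field_simp
      _ ≤ α / t * Real.exp (-1) := by gcongr
      _ = (α⁻¹ * Real.exp 1 * t)⁻¹ := by rw [Real.exp_neg]; field_simp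
  calc l ^ α * Real.exp (-(t * l)) = (l * Real.exp (-(t * l / α))) ^ α := by
        rw [Real.mul_rpow hl (Real.exp_pos _).le, ← Real.exp_mul, neg_mul,
          div_mul_cancel₀ _ hα.ne']
    _ ≤ (α⁻¹ * Real.exp 1 * t)⁻¹ ^ α := by gcongr
    _ = (α⁻¹ * Real.exp 1 * t) ^ (-α) := by
        rw [Real.rpow_neg (by positivity), Real.inv_rpow (by positivity)]

lemma abs_exp_neg_mul_sub_exp_neg_mul_le (hα₀ : 0 < α) (hα₁ : α ≤ 1) (hl : 0 ≤ l) (ht : 0 < t)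
    (htt' : t ≤ t') :
    |Real.exp (-(t * l)) - Real.exp (-(t' * l))| ≤
      (α⁻¹ * Real.exp 1 * t) ^ (-α) * (t' - t) ^ α := by
  have hδ : 0 ≤ t' - t := sub_nonneg.2 htt'
  have factor : Real.exp (-(t * l)) - Real.exp (-(t' * l)) =
      Real.exp (-(t * l)) * (1 - Real.exp (-((t' - t) * l))) := by
    rw [mul_sub, mul_one, ← Real.exp_add]
    ring_nf
  have gap_nonneg : 0 ≤ 1 - Real.exp (-((t' - t) * l)) := by
    rw [sub_nonneg, Real.exp_le_one_iff, neg_nonpos]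
    positivity
  rw [factor, abs_of_nonneg (by positivity)]
  calc Real.exp (-(t * l)) * (1 - Real.exp (-((t' - t) * l)))
      ≤ Real.exp (-(t * l)) * ((t' - t) * l) ^ α := by
        gcongr
        exact one_sub_exp_neg_le_rpow hα₀.le hα₁ (by positivity)
    _ = l ^ α * Real.exp (-(t * l)) * (t' - t) ^ α := by
        rw [Real.mul_rpow hδ hl]
        ring
    _ ≤ (α⁻¹ * Real.exp 1 * t) ^ (-α) * (t' - t) ^ α := by
        gcongr
        exact rpow_mul_exp_neg_mul_le hα₀ hl ht

end Scalar

section FunctionalCalculus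

variable {B : Type*} [NormedRing B] [StarRing B] [NormedAlgebra ℝ B]

lemma exp_neg_smul_eq_cfc [ContinuousFunctionalCalculus ℝ B IsSelfAdjoint] {a : B}
    (ha : IsSelfAdjoint a) (t : ℝ) :
    NormedSpace.exp (-(t • a)) = cfc (fun l : ℝ => Real.exp (-(t * l))) a := by
  have smul_eq_cfc : -(t • a) = cfc (fun l : ℝ => -(t * l)) a := by
    rw [cfc_neg .., cfc_const_mul .., cfc_id' ℝ a]
  rw [smul_eq_cfc, ← CFC.real_exp_eq_normedSpace_exp (cfc_predicate _ a), ← cfc_comp' ..]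

variable [IsometricContinuousFunctionalCalculus ℝ B IsSelfAdjoint] {a : B} {α t t' : ℝ}

lemma norm_exp_neg_smul_le_one (ha : IsSelfAdjoint a) (hspec : ∀ l ∈ spectrum ℝ a, 0 ≤ l)
    (ht : 0 ≤ t) : ‖NormedSpace.exp (-(t • a))‖ ≤ 1 := by
  rw [exp_neg_smul_eq_cfc ha]
  refine norm_cfc_le zero_le_one fun l hl => ?_
  rw [Real.norm_of_nonneg (Real.exp_pos _).le, Real.exp_le_one_iff, neg_nonpos]
  exact mul_nonneg ht (hspec l hl)

lemma norm_exp_neg_smul_sub_exp_neg_smul_le (ha : IsSelfAdjoint a)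
    (hspec : ∀ l ∈ spectrum ℝ a, 0 ≤ l) (hα₀ : 0 < α) (hα₁ : α ≤ 1) (ht : 0 < t)
    (htt' : t ≤ t') :
    ‖NormedSpace.exp (-(t • a)) - NormedSpace.exp (-(t' • a))‖ ≤
      (α⁻¹ * Real.exp 1 * t) ^ (-α) * (t' - t) ^ α := by
  have : 0 ≤ t' - t := sub_nonneg.2 htt'
  rw [exp_neg_smul_eq_cfc ha, exp_neg_smul_eq_cfc ha, ← cfc_sub ..]
  exact norm_cfc_le (by positivity) fun l hl =>
    abs_exp_neg_mul_sub_exp_neg_mul_le hα₀ hα₁ (hspec l hl) ht htt'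

end FunctionalCalculus

section Matrix

open scoped Matrix.Norms.L2Operator

variable {ι 𝕜 : Type*} [Fintype ι] [DecidableEq ι] [RCLike 𝕜] {A : Matrix ι ι 𝕜} {α t t' : ℝ}

/-- The real normed algebra structure given by the `ℓ²` operator norm; its real scalar
multiplication is the entrywise one. -/
instance matrixL2OpRealNormedAlgebra : NormedAlgebra ℝ (Matrix ι ι 𝕜) where
  norm_smul_le c A := by
    rw [RCLike.real_smul_eq_coe_smul (K := 𝕜), norm_smul, RCLike.norm_ofReal, Real.norm_eq_abs]

instance matrixL2OpIsometricContinuousFunctionalCalculus :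
    IsometricContinuousFunctionalCalculus ℝ (Matrix ι ι 𝕜) IsSelfAdjoint where
  isometric A hA := by
    have hA' : A.IsHermitian := hA
    refine AddMonoidHomClass.isometry_of_norm _ fun g => ?_
    rw [hA'.cfcHom_eq_cfcAux, Matrix.IsHermitian.cfcAux_apply, Unitary.conjStarAlgAut_apply,
      ← Unitary.coe_star, CStarRing.norm_mul_coe_unitary, CStarRing.norm_coe_unitary_mul,
      Matrix.l2_opNorm_diagonal]
    refine le_antisymm ((pi_norm_le_iff_of_nonneg (norm_nonneg g)).2 fun i => ?_)
      ((g.norm_le (norm_nonneg _)).2 fun ⟨l, hl⟩ => ?_)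
    · rw [Function.comp_apply, RCLike.norm_ofReal]
      exact g.norm_coe_le_norm _
    · obtain ⟨i, rfl⟩ := hA'.spectrum_real_eq_range_eigenvalues ▸ hl
      rw [Real.norm_eq_abs, ← RCLike.norm_ofReal (K := 𝕜)]
      exact norm_le_pi_norm (RCLike.ofReal ∘ g ∘ fun j =>
        ⟨hA'.eigenvalues j, hA'.eigenvalues_mem_spectrum_real j⟩ : ι → 𝕜) i

lemma norm_toEuclideanLin_apply_le (y : EuclideanSpace 𝕜 ι) :
    ‖Matrix.toEuclideanLin A y‖ ≤ ‖A‖ * ‖y‖ :=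
  (Matrix.toEuclideanCLM (n := ι) (𝕜 := 𝕜) A).le_opNorm y

open scoped ComplexOrder

lemma nonneg_of_mem_spectrum_real (hA : A.PosSemidef) : ∀ l ∈ spectrum ℝ A, 0 ≤ l := by
  rw [hA.isHermitian.spectrum_real_eq_range_eigenvalues]
  exact forall_mem_range.2 hA.eigenvalues_nonneg

lemma norm_toEuclideanLin_exp_neg_smul_apply_le (hA : A.PosSemidef) (ht : 0 ≤ t)
    (y : EuclideanSpace 𝕜 ι) :
    ‖Matrix.toEuclideanLin (NormedSpace.exp (-(t • A))) y‖ ≤ ‖y‖ :=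
  (norm_toEuclideanLin_apply_le y).trans <| mul_le_of_le_one_left (norm_nonneg y) <|
    norm_exp_neg_smul_le_one hA.isHermitian (nonneg_of_mem_spectrum_real hA) ht

lemma norm_toEuclideanLin_exp_neg_smul_sub_apply_le (hA : A.PosSemidef) (hα₀ : 0 < α)
    (hα₁ : α ≤ 1) (ht : 0 < t) (htt' : t ≤ t') (y : EuclideanSpace 𝕜 ι) :
    ‖Matrix.toEuclideanLin (NormedSpace.exp (-(t • A))) y -
        Matrix.toEuclideanLin (NormedSpace.exp (-(t' • A))) y‖ ≤
      (α⁻¹ * Real.exp 1 * t) ^ (-α) * (t' - t) ^ α * ‖y‖ := by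
  rw [← LinearMap.sub_apply, ← map_sub]
  refine (norm_toEuclideanLin_apply_le y).trans ?_
  gcongr
  exact norm_exp_neg_smul_sub_exp_neg_smul_le hA.isHermitian (nonneg_of_mem_spectrum_real hA)
    hα₀ hα₁ ht htt'

end Matrix

section Duhamel

variable {α t : ℝ}

lemma intervalIntegrable_sub_rpow_neg (hα : α < 1) :
    IntervalIntegrable (fun s : ℝ => (t - s) ^ (-α)) volume 0 t := by
  simpa using (intervalIntegral.intervalIntegrable_rpow' (a := t) (b := 0)
    (neg_lt_neg hα)).comp_sub_left t

lemma integral_sub_rpow_neg (hα : α < 1) :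
    ∫ s in (0 : ℝ)..t, (t - s) ^ (-α) = (1 - α)⁻¹ * t ^ (1 - α) := by
  rw [intervalIntegral.integral_comp_sub_left (fun s => s ^ (-α)), sub_self, sub_zero,
    integral_rpow (Or.inl (neg_lt_neg hα)), neg_add_eq_sub,
    Real.zero_rpow (sub_pos.2 hα).ne', sub_zero, div_eq_inv_mul]

variable {E : Type*} [NormedAddCommGroup E] [NormedSpace ℝ E]

/-- Duhamel's (variation of constants) formula at time `t` for the initial value `x`, the forcing
`f` and the propagators `S`, of which neither linearity nor the semigroup law is required.
Integrability is part of the definition since the integral of a non-integrable function is `0`. -/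
def IsDuhamelAt (S : ℝ → E → E) (x : E) (f u : ℝ → E) (t : ℝ) : Prop :=
  IntervalIntegrable (fun s => S (t - s) (f s)) volume 0 t ∧
    u t = S t x + ∫ s in (0 : ℝ)..t, S (t - s) (f s)

variable {S : ℝ → E → E} {x : E} {f u : ℝ → E} {t₁ t₂ K M : ℝ}

lemma IsDuhamelAt.sub_eq (h₁ : IsDuhamelAt S x f u t₁) (h₂ : IsDuhamelAt S x f u t₂)
    (ht₁ : 0 ≤ t₁) (ht₁₂ : t₁ ≤ t₂) :
    u t₁ - u t₂ = (S t₁ x - S t₂ x) +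
      (∫ s in (0 : ℝ)..t₁, (S (t₁ - s) (f s) - S (t₂ - s) (f s))) -
        ∫ s in t₁..t₂, S (t₂ - s) (f s) := by
  obtain ⟨hint₁, hu₁⟩ := h₁
  obtain ⟨hint₂, hu₂⟩ := h₂
  have ht₁_mem : t₁ ∈ uIcc 0 t₂ := by
    rw [uIcc_of_le (ht₁.trans ht₁₂)]
    exact ⟨ht₁, ht₁₂⟩
  have hleft := hint₂.mono_set (uIcc_subset_uIcc_left ht₁_mem)
  have hright := hint₂.mono_set (uIcc_subset_uIcc_right ht₁_mem)
  rw [hu₁, hu₂, intervalIntegral.integral_sub hint₁ hleft,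
    ← intervalIntegral.integral_add_adjacent_intervals hleft hright]
  abel

lemma norm_integral_propagator_sub_le (hα : α < 1) (hK : 0 ≤ K) (ht₁ : 0 ≤ t₁) (ht₁₂ : t₁ ≤ t₂)
    (hS : ∀ t t' y, 0 < t → t ≤ t' → ‖S t y - S t' y‖ ≤ K * t ^ (-α) * (t' - t) ^ α * ‖y‖)
    (hf : ∀ s ∈ Ioo 0 t₁, ‖f s‖ ≤ M) :
    ‖∫ s in (0 : ℝ)..t₁, (S (t₁ - s) (f s) - S (t₂ - s) (f s))‖ ≤
      (t₂ - t₁) ^ α * ((1 - α)⁻¹ * K * t₁ ^ (1 - α) * M) := by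
  have : 0 ≤ t₂ - t₁ := sub_nonneg.2 ht₁₂
  have integrand_le : ∀ s ∈ Ioo 0 t₁, ‖S (t₁ - s) (f s) - S (t₂ - s) (f s)‖ ≤
      (t₂ - t₁) ^ α * K * M * (t₁ - s) ^ (-α) := by
    intro s hs
    have hs₁ : 0 < t₁ - s := sub_pos.2 hs.2
    calc ‖S (t₁ - s) (f s) - S (t₂ - s) (f s)‖
        ≤ K * (t₁ - s) ^ (-α) * (t₂ - s - (t₁ - s)) ^ α * ‖f s‖ :=
          hS _ _ _ hs₁ (sub_le_sub_right ht₁₂ s)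
      _ ≤ K * (t₁ - s) ^ (-α) * (t₂ - t₁) ^ α * M := by
          rw [sub_sub_sub_cancel_right]
          gcongr
          exact hf s hs
      _ = (t₂ - t₁) ^ α * K * M * (t₁ - s) ^ (-α) := by ring
  calc ‖∫ s in (0 : ℝ)..t₁, (S (t₁ - s) (f s) - S (t₂ - s) (f s))‖
      ≤ ∫ s in (0 : ℝ)..t₁, (t₂ - t₁) ^ α * K * M * (t₁ - s) ^ (-α) := by
        refine intervalIntegral.norm_integral_le_of_norm_le ht₁ ?_
          ((intervalIntegrable_sub_rpow_neg hα).const_mul _)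
        filter_upwards [Measure.ae_ne volume t₁] with s hs_ne hs
        exact integrand_le s ⟨hs.1, hs.2.lt_of_ne hs_ne⟩
    _ = (t₂ - t₁) ^ α * ((1 - α)⁻¹ * K * t₁ ^ (1 - α) * M) := by
        rw [intervalIntegral.integral_const_mul, integral_sub_rpow_neg hα]
        ring

lemma norm_integral_propagator_le (ht₁₂ : t₁ ≤ t₂)
    (hS : ∀ t y, 0 ≤ t → ‖S t y‖ ≤ ‖y‖) (hf : ∀ s ∈ Ioc t₁ t₂, ‖f s‖ ≤ M) :
    ‖∫ s in t₁..t₂, S (t₂ - s) (f s)‖ ≤ M * (t₂ - t₁) := by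
  rw [← abs_of_nonneg (sub_nonneg.2 ht₁₂)]
  refine intervalIntegral.norm_integral_le_of_norm_le_const fun s hs => ?_
  rw [uIoc_of_le ht₁₂] at hs
  exact (hS _ _ (sub_nonneg.2 hs.2)).trans (hf s hs)

theorem IsDuhamelAt.norm_sub_le_rpow_mul (h₁ : IsDuhamelAt S x f u t₁) (h₂ : IsDuhamelAt S x f u t₂)
    (hα : α < 1) (hK : 0 ≤ K) (ht₁ : 0 < t₁) (ht₁₂ : t₁ ≤ t₂)
    (hS_le : ∀ t y, 0 ≤ t → ‖S t y‖ ≤ ‖y‖)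
    (hS_sub : ∀ t t' y, 0 < t → t ≤ t' → ‖S t y - S t' y‖ ≤ K * t ^ (-α) * (t' - t) ^ α * ‖y‖)
    (hf : ∀ s ∈ Ioc 0 t₂, ‖f s‖ ≤ M) :
    ‖u t₁ - u t₂‖ ≤ (t₂ - t₁) ^ α *
      (K * t₁ ^ (-α) * ‖x‖ + (1 - α)⁻¹ * K * t₁ ^ (1 - α) * M + (t₂ - t₁) ^ (1 - α) * M) := by
  have hδ : (t₂ - t₁) ^ α * (t₂ - t₁) ^ (1 - α) = t₂ - t₁ := by
    rw [← Real.rpow_add' (sub_nonneg.2 ht₁₂) (by simp), add_sub_cancel, Real.rpow_one]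
  have initial_le := hS_sub t₁ t₂ x ht₁ ht₁₂
  have past_le := norm_integral_propagator_sub_le (f := f) (M := M) hα hK ht₁.le ht₁₂ hS_sub
    fun s hs => hf s ⟨hs.1, hs.2.le.trans ht₁₂⟩
  have recent_le := norm_integral_propagator_le ht₁₂ hS_le
    fun s hs => hf s ⟨ht₁.trans hs.1, hs.2⟩
  rw [h₁.sub_eq h₂ ht₁.le ht₁₂]
  calc _ ≤ K * t₁ ^ (-α) * (t₂ - t₁) ^ α * ‖x‖ +
        (t₂ - t₁) ^ α * ((1 - α)⁻¹ * K * t₁ ^ (1 - α) * M) + M * (t₂ - t₁) :=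
        (norm_sub_le _ _).trans (add_le_add (norm_add_le_of_le initial_le past_le) recent_le)
    _ = _ := by linear_combination -M * hδ

end Duhamel

open scoped ComplexOrder in
theorem mild_solution_holder_estimate_general {ι 𝕜 : Type*} [Fintype ι] [DecidableEq ι] [RCLike 𝕜]
    {A : Matrix ι ι 𝕜} (hA : A.PosSemidef) {x : EuclideanSpace 𝕜 ι}
    {f u : ℝ → EuclideanSpace 𝕜 ι} {α t₁ t₂ M : ℝ} (hα₀ : 0 < α) (hα₁ : α < 1)
    (ht₁ : 0 < t₁) (ht₁₂ : t₁ ≤ t₂)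
    (hu₁ : IsDuhamelAt (fun t => Matrix.toEuclideanLin (NormedSpace.exp (-(t • A)))) x f u t₁)
    (hu₂ : IsDuhamelAt (fun t => Matrix.toEuclideanLin (NormedSpace.exp (-(t • A)))) x f u t₂)
    (hf : ∀ s ∈ Ioc 0 t₂, ‖f s‖ ≤ M) :
    ‖u t₁ - u t₂‖ ≤ (t₂ - t₁) ^ α *
      ((α⁻¹ * Real.exp 1 * t₁) ^ (-α) * ‖x‖ +
        (1 - α)⁻¹ * (α⁻¹ * Real.exp 1) ^ (-α) * t₁ ^ (1 - α) * M +
        (t₂ - t₁) ^ (1 - α) * M) := by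
  rw [Real.mul_rpow (by positivity) ht₁.le]
  refine hu₁.norm_sub_le_rpow_mul hu₂ hα₁ (by positivity) ht₁ ht₁₂
    (fun t y ht => norm_toEuclideanLin_exp_neg_smul_apply_le hA ht y)
    (fun t t' y ht htt' => ?_) hf
  rw [← Real.mul_rpow (by positivity) ht.le]
  exact norm_toEuclideanLin_exp_neg_smul_sub_apply_le hA hα₀ hα₁.le ht htt' y

/-- Hölder-1/2 equicontinuity of mild solutions away from `t = 0`
(the finite-dimensional δ = 0 case of estimates (sdd8-5-6)–(sdd8-5-8) of the paper):
if the right-hand side is bounded by `M` along the solution, then for `0 < t₁ ≤ t₂ ≤ T`,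
`‖u(t₁) − u(t₂)‖ ≤ (t₂−t₁)^{1/2} [(2e t₁)^{−1/2}‖φ(0)‖ + 2(2e)^{−1/2} t₁^{1/2} M
+ (t₂−t₁)^{1/2} M]`. -/
theorem mild_solution_holder_estimate
    {n : ℕ} (hn : 1 ≤ n) (r : ℝ) (hr : 0 < r)
    (A : Matrix (Fin n) (Fin n) ℝ) (hA : A.PosDef) (hAs : A.IsSymm)
    (d : ℝ) (hd : 0 ≤ d)
    (b : EuclideanSpace ℝ (Fin n) → EuclideanSpace ℝ (Fin n))
    (η : C(Set.Icc (-r) (0:ℝ), EuclideanSpace ℝ (Fin n)) → ℝ)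
    (hηrange : ∀ φ, η φ ∈ Set.Icc (0:ℝ) r)
    (T : ℝ) (hT : 0 < T)
    (φ : C(Set.Icc (-r) (0:ℝ), EuclideanSpace ℝ (Fin n)))
    (u : ℝ → EuclideanSpace ℝ (Fin n))
    (hu : IsMildSolution r hr T d A b η φ u)
    (M : ℝ) (hM : 0 ≤ M)
    (hMb : ∀ s ∈ Set.Icc (0:ℝ) T, ‖b (u (s - η (histSeg r u s))) - d • u s‖ ≤ M) :
    ∀ t₁ t₂ : ℝ, 0 < t₁ → t₁ ≤ t₂ → t₂ ≤ T →
      ‖u t₁ - u t₂‖ ≤ (t₂ - t₁) ^ ((1 / 2 : ℝ)) *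
        ((2 * Real.exp 1 * t₁) ^ (-(1 / 2 : ℝ)) *
            ‖φ ⟨0, Set.right_mem_Icc.mpr (by linarith)⟩‖ +
          2 * (2 * Real.exp 1) ^ (-(1 / 2 : ℝ)) * t₁ ^ ((1 / 2 : ℝ)) * M +
          (t₂ - t₁) ^ ((1 / 2 : ℝ)) * M) := by
  intro t₁ t₂ ht₁ ht₁₂ ht₂
  convert mild_solution_holder_estimate_general (α := 1 / 2) hA.posSemidef (by norm_num)
    (by norm_num) ht₁ ht₁₂ (hu.2.2 t₁ ⟨ht₁.le, ht₁₂.trans ht₂⟩)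
    (hu.2.2 t₂ ⟨ht₁.le.trans ht₁₂, ht₂⟩)
    (fun s hs => hMb s ⟨hs.1.le, hs.2.trans ht₂⟩) using 5 <;> norm_num
end
end
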